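/- Let f : ℝⁿ → ℝ be differentiable with ‖∇f(θ) - ∇f(θ')‖ ≤ L‖θ - θ'‖ and ‖∇f(θ)‖ ≤ B for all θ, θ' and constants L, B > 0. Fix δ > 0, Δt > 0, and points θ, θ' ∈ ℝⁿ (with θ' playing the role of θ(t−Δt) and θ of θ(t)). Define the difference quotient âᵢ = (∂f/∂θᵢ(θ) − ∂f/∂θᵢ(θ'))/Δt and Ẑᵢᵢ⁻¹ = max{ √(max{ −δ⁻¹ · ∂f/∂θᵢ(θ) · âᵢ , 0 }) , 1 }. Then Ẑᵢᵢ⁻¹ ≥ 1 for every i, and Σᵢ Ẑᵢᵢ⁻¹ ≤ δ⁻¹ (Δt)⁻¹ B L ‖θ' − θ‖ + n. -/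

import Mathlib

/-- Boundedness of the first-order (approximate) scaling matrix
`Ẑᵢᵢ⁻¹ = max{√(max{−δ⁻¹ ∂ᵢf(θ) âᵢ, 0}), 1}` built from the difference quotient
`âᵢ = (∂ᵢf(θ) − ∂ᵢf(θ'))/Δt`: each entry is at least `1` and the sum of the
entries is at most `δ⁻¹ (Δt)⁻¹ B L ‖θ' − θ‖ + n`. -/
theorem ZinvApprox_bounded
    (n : ℕ) (f : EuclideanSpace ℝ (Fin n) → ℝ)
    (L B δ Δt : ℝ) (hL : 0 < L) (hB : 0 < B) (hδ : 0 < δ) (hΔt : 0 < Δt)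
    (hdiff : Differentiable ℝ f)
    (hlip : ∀ x y, ‖gradient f x - gradient f y‖ ≤ L * ‖x - y‖)
    (hbdd : ∀ x, ‖gradient f x‖ ≤ B)
    (θ θ' : EuclideanSpace ℝ (Fin n)) :
    (∀ i : Fin n,
        1 ≤ max (Real.sqrt (max (-(δ⁻¹ *
              (gradient f θ i * ((gradient f θ i - gradient f θ' i) / Δt)))) 0)) 1) ∧
      (∑ i : Fin n,
          max (Real.sqrt (max (-(δ⁻¹ *
              (gradient f θ i * ((gradient f θ i - gradient f θ' i) / Δt)))) 0)) 1) ≤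
        δ⁻¹ * Δt⁻¹ * B * L * ‖θ' - θ‖ + n := by
  refine ⟨fun i => le_max_right _ _, ?_⟩
  have key : ∀ x : ℝ, max (Real.sqrt (max x 0)) 1 ≤ |x| + 1 := by
    intro x
    have h1 : max x 0 ≤ |x| := max_le (le_abs_self x) (abs_nonneg x)
    have h0 : 0 ≤ |x| := abs_nonneg x
    refine max_le ?_ (by linarith)
    rw [Real.sqrt_le_left (by linarith)]
    nlinarith
  have cs : ∑ i, ‖gradient f θ i‖ * ‖(gradient f θ - gradient f θ') i‖
      ≤ ‖gradient f θ‖ * ‖gradient f θ - gradient f θ'‖ := by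
    rw [EuclideanSpace.norm_eq, EuclideanSpace.norm_eq]
    exact Real.sum_mul_le_sqrt_mul_sqrt _ _ _
  have hb : ‖gradient f θ‖ * ‖gradient f θ - gradient f θ'‖ ≤ B * (L * ‖θ' - θ‖) := by
    rw [norm_sub_rev θ' θ]
    exact mul_le_mul (hbdd θ) (hlip θ θ') (norm_nonneg _) hB.le
  calc _ ≤ ∑ i : Fin n, (δ⁻¹ * Δt⁻¹ *
          (‖gradient f θ i‖ * ‖(gradient f θ - gradient f θ') i‖) + 1) := by
        refine Finset.sum_le_sum fun i _ => (key _).trans (le_of_eq ?_)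
        rw [abs_neg, abs_mul, abs_mul, abs_div, abs_of_pos hΔt, abs_of_pos (inv_pos.2 hδ)]
        simp only [Real.norm_eq_abs, PiLp.sub_apply]
        ring
    _ = δ⁻¹ * Δt⁻¹ * (∑ i, ‖gradient f θ i‖ * ‖(gradient f θ - gradient f θ') i‖) + n := by
        rw [Finset.sum_add_distrib, ← Finset.mul_sum]
        simp
    _ ≤ δ⁻¹ * Δt⁻¹ * (B * (L * ‖θ' - θ‖)) + n := by
        have := cs.trans hb
        gcongr
    _ = _ := by ring
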